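/- The configuration pairing descends to a perfect pairing between Lie(n) = Θ_n/J_n and Eil(n) = Γ_n/I_n: the induced bilinear pairing ⟨·,·⟩ : Eil(n) × Lie(n) → R is well defined and the induced maps Lie(n) → Hom_R(Eil(n), R) and Eil(n) → Hom_R(Lie(n), R) are isomorphisms. -/

import Mathlib

open scoped Classical

noncomputable section

namespace GTPairing

/-- Planar binary trees with natural-number-labeled leaves.  A `PTree` is a rooted
binary (trivalent) tree embedded in the upper half plane; `node l r` has `l` as its
left branch and `r` as its right branch. -/
inductive PTree : Type
  | leaf (a : ℕ) : PTree
  | node (l r : PTree) : PTree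
  deriving DecidableEq

namespace PTree

/-- The labels of the leaves, in planar (left-to-right) order. -/
def leaves : PTree → List ℕ
  | .leaf a => [a]
  | .node l r => l.leaves ++ r.leaves

/-- The internal (trivalent) vertices of a planar tree, recorded as the subtrees they
support, listed in the left-to-right (in-order) planar order. -/
def nodesList : PTree → List PTree
  | .leaf _ => []
  | .node l r => l.nodesList ++ (PTree.node l r :: r.nodesList)

/-- `nadir t i j` is the nadir (lowest vertex) of the shortest path in `t` between the
leaves labeled `i` and `j`, recorded as the subtree it supports, together with `true`
if the leaf labeled `i` lies over the left branch of the nadir (and `j` over the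
right), i.e. if the path travels from left to right at its nadir. -/
def nadir : PTree → ℕ → ℕ → Option (PTree × Bool)
  | .leaf _, _, _ => none
  | .node l r, i, j =>
    if i ∈ l.leaves ∧ j ∈ r.leaves then some (.node l r, true)
    else if j ∈ l.leaves ∧ i ∈ r.leaves then some (.node l r, false)
    else if i ∈ l.leaves ∧ j ∈ l.leaves then nadir l i j
    else if i ∈ r.leaves ∧ j ∈ r.leaves then nadir r i j
    else none

/-- Fusing: `graft t m s` identifies the root edge of `s` with the leaf edge of `t`
labeled by `m`, i.e. substitutes `s` for the leaf labeled `m`. -/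
def graft : PTree → ℕ → PTree → PTree
  | .leaf a, m, s => if a = m then s else .leaf a
  | .node l r, m, s => .node (l.graft m s) (r.graft m s)

/-- Relabel the leaves of a tree. -/
def relabel (f : ℕ → ℕ) : PTree → PTree
  | .leaf a => .leaf (f a)
  | .node l r => .node (l.relabel f) (r.relabel f)

end PTree

/-- The nadir of the path between the two endpoints of an edge, forgetting planar
direction data. -/
def nadirFst (t : PTree) (e : ℕ × ℕ) : Option PTree := (t.nadir e.1 e.2).map Prod.fst

/-- The (even) configuration pairing between a set of oriented edges `E` (a Graph) and
a planar binary tree `t` (a Tree): it is `0` unless `e ↦ β_{G,T}(e)` (sending an edge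
to the nadir of the path between the corresponding leaves) is a bijection from the
edges onto the internal vertices of `t`, in which case it is `(-1)^N` where `N` is the
number of edges `(i,j)` whose path travels from left to right (`i` over the left
branch) at its nadir. -/
def pairPT (E : Multiset (ℕ × ℕ)) (t : PTree) : ℤ :=
  if E.map (nadirFst t) = ((t.nodesList.map some : List (Option PTree)) : Multiset (Option PTree))
  then (-1) ^ (Multiset.card (E.filter (fun e => (t.nadir e.1 e.2).map Prod.snd = some true)))
  else 0

/-- A Tree with leaves labeled bijectively by the finite set `S`. -/
def IsTreeOn (S : Finset ℕ) (t : PTree) : Prop := t.leaves.Nodup ∧ t.leaves.toFinset = S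

def TreeOn (S : Finset ℕ) : Type := {t : PTree // IsTreeOn S t}

/-- Adjacency relation determined by a multiset of oriented edges. -/
def Adj (E : Multiset (ℕ × ℕ)) (a b : ℕ) : Prop := (a, b) ∈ E ∨ (b, a) ∈ E

/-- Connectivity of an edge multiset on the vertex set `S`. -/
def ConnOn (S : Finset ℕ) (E : Multiset (ℕ × ℕ)) : Prop :=
  ∀ a ∈ S, ∀ b ∈ S, Relation.ReflTransGen (Adj E) a b

/-- A Graph on the vertex set `S`: a connected graph with oriented edges (each edge
joining two distinct vertices of `S`). -/
def IsGraphOn (S : Finset ℕ) (E : Multiset (ℕ × ℕ)) : Prop :=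
  (∀ e ∈ E, e.1 ∈ S ∧ e.2 ∈ S ∧ e.1 ≠ e.2) ∧ ConnOn S E

def GraphOn (S : Finset ℕ) : Type := {E : Multiset (ℕ × ℕ) // IsGraphOn S E}

variable (R : Type) [CommRing R]

/-- `Θ_S`: the free module on Trees with leaves labeled by `S`. -/
abbrev ThetaF (S : Finset ℕ) : Type := TreeOn S →₀ R

/-- `Γ_S`: the free module on Graphs with vertices labeled by `S`. -/
abbrev GammaF (S : Finset ℕ) : Type := GraphOn S →₀ R

variable {R}

/-- The configuration pairing, extended bilinearly to the free modules. -/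
def pairGT {S : Finset ℕ} (β : GammaF R S) (α : ThetaF R S) : R :=
  β.sum fun G b => α.sum fun T a => b * a * ((pairPT G.1 T.1 : ℤ) : R)

/-- The basis element of a free module on a subtype, when the defining property holds
(and `0` otherwise; in all uses below the property does hold). -/
def bsingle {α : Type} (P : α → Prop) (a : α) : ({x : α // P x} →₀ R) :=
  if h : P a then Finsupp.single ⟨a, h⟩ (1 : R) else 0

variable (R)

/-- Jacobi combinations of Trees: the sum of the three Trees obtained from the unique
3-leaf Tree by fusing Trees `A`, `B`, `C` onto its three leaves in the three
cyclically related orders and fusing a Tree `D` onto its root (at the leaf `m` of `D`). -/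
def jacobiSet (S : Finset ℕ) : Set (ThetaF R S) :=
  { x | ∃ (D A B C : PTree) (m : ℕ) (T₁ T₂ T₃ : TreeOn S),
      D.leaves.Nodup ∧ m ∈ D.leaves ∧
      T₁.1 = D.graft m (.node (.node A B) C) ∧
      T₂.1 = D.graft m (.node (.node B C) A) ∧
      T₃.1 = D.graft m (.node (.node C A) B) ∧
      x = Finsupp.single T₁ 1 + Finsupp.single T₂ 1 + Finsupp.single T₃ 1 }

/-- Symmetry combinations of Trees: the sum of two Trees which are isomorphic as
labeled graphs and have the same planar ordering of input edges at every internal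
vertex except exactly one (here: exactly the vertex at the leaf `m` of `D`, whose two
branches `A` and `B` are switched). -/
def treeSymmSet (S : Finset ℕ) : Set (ThetaF R S) :=
  { x | ∃ (D A B : PTree) (m : ℕ) (T₁ T₂ : TreeOn S),
      D.leaves.Nodup ∧ m ∈ D.leaves ∧
      T₁.1 = D.graft m (.node A B) ∧
      T₂.1 = D.graft m (.node B A) ∧
      x = Finsupp.single T₁ 1 + Finsupp.single T₂ 1 }

/-- The submodule `J_S ⊆ Θ_S` generated by Jacobi and symmetry combinations. -/
def Jsub (S : Finset ℕ) : Submodule R (ThetaF R S) :=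
  Submodule.span R (jacobiSet R S ∪ treeSymmSet R S)

/-- Arnold combinations of Graphs: sums of three Graphs which agree except on edges
among three fixed distinct vertices `i`, `j`, `k`, where they contain respectively the
edge pairs `{i→j, j→k}`, `{j→k, k→i}` and `{k→i, i→j}`. -/
def arnoldSet (S : Finset ℕ) : Set (GammaF R S) :=
  { x | ∃ (i j k : ℕ) (E₀ : Multiset (ℕ × ℕ)) (G₁ G₂ G₃ : GraphOn S),
      i ≠ j ∧ j ≠ k ∧ i ≠ k ∧
      G₁.1 = (i, j) ::ₘ (j, k) ::ₘ E₀ ∧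
      G₂.1 = (j, k) ::ₘ (k, i) ::ₘ E₀ ∧
      G₃.1 = (k, i) ::ₘ (i, j) ::ₘ E₀ ∧
      x = Finsupp.single G₁ 1 + Finsupp.single G₂ 1 + Finsupp.single G₃ 1 }

/-- Symmetry combinations of Graphs: sums of two Graphs which differ only in the
orientation of exactly one edge. -/
def graphSymmSet (S : Finset ℕ) : Set (GammaF R S) :=
  { x | ∃ (i j : ℕ) (E₀ : Multiset (ℕ × ℕ)) (G₁ G₂ : GraphOn S),
      G₁.1 = (i, j) ::ₘ E₀ ∧ G₂.1 = (j, i) ::ₘ E₀ ∧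
      x = Finsupp.single G₁ 1 + Finsupp.single G₂ 1 }

/-- Graphs having two edges with the same pair of endpoints. -/
def doubledSet (S : Finset ℕ) : Set (GammaF R S) :=
  { x | ∃ (i j : ℕ) (E₀ : Multiset (ℕ × ℕ)) (G : GraphOn S),
      (G.1 = (i, j) ::ₘ (i, j) ::ₘ E₀ ∨ G.1 = (i, j) ::ₘ (j, i) ::ₘ E₀) ∧
      x = Finsupp.single G 1 }

/-- The submodule `I_S ⊆ Γ_S` generated by Arnold combinations, symmetry combinations
and Graphs with doubled edges. -/
def Isub (S : Finset ℕ) : Submodule R (GammaF R S) :=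
  Submodule.span R (arnoldSet R S ∪ graphSymmSet R S ∪ doubledSet R S)

/-- `Lie(S) = Θ_S / J_S`. -/
abbrev LieQ (S : Finset ℕ) : Type := ThetaF R S ⧸ Jsub R S

/-- `Eil(S) = Γ_S / I_S`. -/
abbrev EilQ (S : Finset ℕ) : Type := GammaF R S ⧸ Isub R S

end GTPairing

namespace GTPairing

/-!
The configuration pairing of `G` and `T` is a product over the internal vertices of `T` of signs
depending only on the edges of `G` between the leaves over the two branches of the vertex, so on
Jacobi and symmetry combinations only the local factors at one or two vertices change. On Arnold
combinations the pairing vanishes because two of the three paths joining `i`, `j` and `k` share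
their nadir, through which they pass in opposite directions once the triangle is cyclically
oriented.

Fix a label `r`. Modulo Jacobi and symmetry combinations every Tree is a combination of tall Trees,
whose leaf `r` is deepest and whose other leaves branch off one at a time from the path to the
root; modulo Arnold combinations, symmetry combinations and doubled edges every Graph is a
combination of long Graphs, which are paths starting at `r`. Both families are indexed by the
orderings of the other labels and pair to `±1` for equal orderings and to `0` otherwise, so up to
sign they are dual bases of `Lie(S)` and `Eil(S)`.
-/

namespace PTree

/-- The set of labels of the leaves of a tree. -/
def labels (t : PTree) : Finset ℕ := t.leaves.toFinset

variable {D X Y l r t : PTree} {i j m x : ℕ}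

@[simp]
lemma mem_labels : x ∈ t.labels ↔ x ∈ t.leaves := List.mem_toFinset

@[simp]
lemma labels_leaf (a : ℕ) : (leaf a).labels = {a} := rfl

@[simp]
lemma labels_node (l r : PTree) : (node l r).labels = l.labels ∪ r.labels :=
  List.toFinset_append

lemma labels_nonempty (t : PTree) : t.labels.Nonempty := by
  induction t with
  | leaf a => exact Finset.singleton_nonempty a
  | node l r hl _ => exact labels_node l r ▸ hl.inl

lemma nodup_leaves_node_iff :
    (node l r).leaves.Nodup ↔
      l.leaves.Nodup ∧ r.leaves.Nodup ∧ Disjoint l.labels r.labels := by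
  simp only [leaves, List.nodup_append', Finset.disjoint_left, List.disjoint_left, mem_labels]

lemma mem_nodesList_node :
    t ∈ (node l r).nodesList ↔ t ∈ l.nodesList ∨ t = node l r ∨ t ∈ r.nodesList := by
  simp [nodesList]

lemma labels_subset_of_mem_nodesList {v : PTree} (hv : v ∈ t.nodesList) :
    v.labels ⊆ t.labels := by
  induction t with
  | leaf a => simp [nodesList] at hv
  | node l r hl hr =>
    rw [labels_node]
    rcases mem_nodesList_node.1 hv with hv | rfl | hv
    · exact (hl hv).trans Finset.subset_union_left
    · rw [labels_node]
    · exact (hr hv).trans Finset.subset_union_right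

lemma nodup_nodesList (ht : t.leaves.Nodup) : t.nodesList.Nodup := by
  induction t with
  | leaf a => exact List.nodup_nil
  | node l r hl hr =>
    obtain ⟨hl', hr', hlr⟩ := nodup_leaves_node_iff.1 ht
    have not_subset_left : ¬ (node l r).labels ⊆ l.labels := fun h =>
      (labels_nonempty r).ne_empty <|
        hlr.symm.eq_bot_of_le (Finset.subset_union_right.trans (labels_node l r ▸ h))
    have not_subset_right : ¬ (node l r).labels ⊆ r.labels := fun h =>
      (labels_nonempty l).ne_empty <|
        hlr.eq_bot_of_le (Finset.subset_union_left.trans (labels_node l r ▸ h))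
    have disjoint_nodes : ∀ v ∈ l.nodesList, v ∉ r.nodesList := fun v hvl hvr =>
      (labels_nonempty v).ne_empty <| Finset.subset_empty.1 <|
        hlr (labels_subset_of_mem_nodesList hvl) (labels_subset_of_mem_nodesList hvr)
    simp only [nodesList, List.nodup_append', List.nodup_cons, List.disjoint_cons_right]
    exact ⟨hl hl', ⟨fun h => not_subset_right (labels_subset_of_mem_nodesList h), hr hr'⟩,
      fun h => not_subset_left (labels_subset_of_mem_nodesList h),
      List.disjoint_left.2 disjoint_nodes⟩

/-! ### Nadirs -/

lemma nadir_node_left_right (hi : i ∈ l.labels) (hj : j ∈ r.labels) :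
    (node l r).nadir i j = some (node l r, true) :=
  if_pos ⟨mem_labels.1 hi, mem_labels.1 hj⟩

lemma nadir_node_right_left (hlr : Disjoint l.labels r.labels) (hi : i ∈ r.labels)
    (hj : j ∈ l.labels) : (node l r).nadir i j = some (node l r, false) := by
  have hi' := mt mem_labels.2 (Finset.disjoint_right.1 hlr hi)
  rw [mem_labels] at hi hj
  simp [nadir, hi, hj, hi']

lemma nadir_node_left (hlr : Disjoint l.labels r.labels) (hi : i ∈ l.labels)
    (hj : j ∈ l.labels) : (node l r).nadir i j = l.nadir i j := by
  have hi' := mt mem_labels.2 (Finset.disjoint_left.1 hlr hi)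
  have hj' := mt mem_labels.2 (Finset.disjoint_left.1 hlr hj)
  rw [mem_labels] at hi hj
  simp [nadir, hi, hj, hi', hj']

lemma nadir_node_right (hlr : Disjoint l.labels r.labels) (hi : i ∈ r.labels)
    (hj : j ∈ r.labels) : (node l r).nadir i j = r.nadir i j := by
  have hi' := mt mem_labels.2 (Finset.disjoint_right.1 hlr hi)
  have hj' := mt mem_labels.2 (Finset.disjoint_right.1 hlr hj)
  rw [mem_labels] at hi hj
  simp [nadir, hi, hj, hi', hj']

lemma nadir_swap (ht : t.leaves.Nodup) (hi : i ∈ t.labels) (hj : j ∈ t.labels) :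
    t.nadir j i = (t.nadir i j).map (Prod.map id not) := by
  induction t with
  | leaf a => rfl
  | node l r hl hr =>
    obtain ⟨hl', hr', hlr⟩ := nodup_leaves_node_iff.1 ht
    rw [labels_node, Finset.mem_union] at hi hj
    rcases hi with hi | hi <;> rcases hj with hj | hj
    · rw [nadir_node_left hlr hi hj, nadir_node_left hlr hj hi, hl hl' hi hj]
    · rw [nadir_node_left_right hi hj, nadir_node_right_left hlr hj hi]; rfl
    · rw [nadir_node_right_left hlr hi hj, nadir_node_left_right hj hi]; rfl
    · rw [nadir_node_right hlr hi hj, nadir_node_right hlr hj hi, hr hr' hi hj]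

lemma exists_nadir_eq_some (ht : t.leaves.Nodup) (hi : i ∈ t.labels) (hj : j ∈ t.labels)
    (hij : i ≠ j) : ∃ v ∈ t.nodesList, ∃ b, t.nadir i j = some (v, b) := by
  induction t with
  | leaf a =>
    rw [labels_leaf, Finset.mem_singleton] at hi hj
    exact absurd (hi.trans hj.symm) hij
  | node l r hl hr =>
    obtain ⟨hl', hr', hlr⟩ := nodup_leaves_node_iff.1 ht
    simp only [mem_nodesList_node]
    rw [labels_node, Finset.mem_union] at hi hj
    rcases hi with hi | hi <;> rcases hj with hj | hj
    · obtain ⟨v, hv, b, h⟩ := hl hl' hi hj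
      exact ⟨v, .inl hv, b, (nadir_node_left hlr hi hj).trans h⟩
    · exact ⟨_, .inr (.inl rfl), _, nadir_node_left_right hi hj⟩
    · exact ⟨_, .inr (.inl rfl), _, nadir_node_right_left hlr hi hj⟩
    · obtain ⟨v, hv, b, h⟩ := hr hr' hi hj
      exact ⟨v, .inr (.inr hv), b, (nadir_node_right hlr hi hj).trans h⟩

lemma mem_labels_of_nadir_eq_some_true (h : t.nadir i j = some (node l r, true)) :
    i ∈ l.labels ∧ j ∈ r.labels := by
  induction t with
  | leaf a => simp [nadir] at h
  | node l' r' hl hr =>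
    simp only [nadir] at h
    split_ifs at h with hij <;> simp_all

lemma nadir_eq_some_true_iff (ht : t.leaves.Nodup) (hv : node l r ∈ t.nodesList) :
    t.nadir i j = some (node l r, true) ↔ i ∈ l.labels ∧ j ∈ r.labels := by
  refine ⟨mem_labels_of_nadir_eq_some_true, fun ⟨hi, hj⟩ => ?_⟩
  induction t with
  | leaf a => simp [nodesList] at hv
  | node l' r' hl hr =>
    obtain ⟨hl', hr', hlr⟩ := nodup_leaves_node_iff.1 ht
    have mem_of_mem_nodesList {s : PTree} (h : node l r ∈ s.nodesList) :
        i ∈ s.labels ∧ j ∈ s.labels :=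
      have hs := labels_node l r ▸ labels_subset_of_mem_nodesList h
      ⟨hs (Finset.mem_union_left _ hi), hs (Finset.mem_union_right _ hj)⟩
    rcases mem_nodesList_node.1 hv with hv | ⟨⟨⟩⟩ | hv
    · obtain ⟨hi', hj'⟩ := mem_of_mem_nodesList hv
      rw [nadir_node_left hlr hi' hj', hl hl' hv]
    · exact nadir_node_left_right hi hj
    · obtain ⟨hi', hj'⟩ := mem_of_mem_nodesList hv
      rw [nadir_node_right hlr hi' hj', hr hr' hv]

lemma nadir_eq_some_false_iff (ht : t.leaves.Nodup) (hv : node l r ∈ t.nodesList)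
    (hi : i ∈ t.labels) (hj : j ∈ t.labels) :
    t.nadir i j = some (node l r, false) ↔ i ∈ r.labels ∧ j ∈ l.labels := by
  rw [and_comm, ← nadir_eq_some_true_iff ht hv, nadir_swap ht hi hj]
  rcases t.nadir i j with _ | ⟨v, _ | _⟩ <;> simp

/-! ### Grafting -/

lemma graft_of_notMem (hm : m ∉ D.labels) (X : PTree) : D.graft m X = D := by
  induction D with
  | leaf a => exact if_neg fun h : a = m => hm (h ▸ Finset.mem_singleton_self a)
  | node l r hl hr =>
    rw [labels_node, Finset.notMem_union] at hm
    rw [graft, hl hm.1, hr hm.2]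

lemma labels_graft (hm : m ∈ D.labels) (X : PTree) :
    (D.graft m X).labels = D.labels.erase m ∪ X.labels := by
  induction D with
  | leaf a =>
    obtain rfl : m = a := Finset.mem_singleton.1 hm
    simp [graft]
  | node l r hl hr =>
    rw [graft, labels_node, labels_node, Finset.erase_union_distrib]
    by_cases hl' : m ∈ l.labels <;> by_cases hr' : m ∈ r.labels
    · rw [hl hl', hr hr', ← Finset.union_union_distrib_right]
    · rw [hl hl', graft_of_notMem hr', Finset.erase_eq_of_notMem hr', Finset.union_right_comm]
    · rw [hr hr', graft_of_notMem hl', Finset.erase_eq_of_notMem hl', Finset.union_assoc]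
    · simp_all

lemma leaves_graft_perm (D : PTree) (m : ℕ) (h : X.leaves.Perm Y.leaves) :
    (D.graft m X).leaves.Perm (D.graft m Y).leaves := by
  induction D with
  | leaf a => simp only [graft]; split_ifs <;> simp [h]
  | node l r hl hr => exact hl.append hr

lemma nodup_leaves_of_nodup_graft (hm : m ∈ D.labels) (h : (D.graft m X).leaves.Nodup) :
    X.leaves.Nodup := by
  induction D with
  | leaf a => rwa [graft, if_pos (Finset.mem_singleton.1 hm).symm] at h
  | node l r hl hr =>
    obtain ⟨hl', hr', -⟩ := nodup_leaves_node_iff.1 h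
    rw [labels_node, Finset.mem_union] at hm
    exact hm.elim (hl · hl') (hr · hr')

end PTree

/-! ### The configuration pairing as a product over vertices -/

/-- The number of edges of `E` oriented from a vertex in `A` to a vertex in `B`. -/
def crossings (A B : Finset ℕ) (E : Multiset (ℕ × ℕ)) : ℕ :=
  E.countP fun e => e.1 ∈ A ∧ e.2 ∈ B

/-- The local factor of the configuration pairing at a vertex whose left and right branches carry
the labels `A` and `B`: zero unless exactly one edge of `E` joins `A` and `B`, in which case it is
`-1` or `1` according to whether this edge goes from left to right or not. -/
def crossingSign (A B : Finset ℕ) (E : Multiset (ℕ × ℕ)) : ℤ :=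
  if crossings A B E + crossings B A E = 1 then (-1) ^ crossings A B E else 0

/-- The product of the local factors `crossingSign` over the internal vertices of a tree. -/
def crossingProd (E : Multiset (ℕ × ℕ)) : PTree → ℤ
  | .leaf _ => 1
  | .node l r => crossingSign l.labels r.labels E * crossingProd E l * crossingProd E r

section

variable {ε α : Type*} [DecidableEq α] {s : Finset α} {E : Multiset ε} {f : ε → α}

lemma map_eq_val_iff_forall_count_eq_one (hf : ∀ e ∈ E, f e ∈ s) :
    E.map f = s.val ↔ ∀ v ∈ s, (E.map f).count v = 1 := by
  refine ⟨fun h v hv => h ▸ Multiset.count_eq_one_of_mem s.nodup hv, fun h => ?_⟩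
  ext v
  by_cases hv : v ∈ s
  · rw [h v hv, Multiset.count_eq_one_of_mem s.nodup hv]
  · have hv' : v ∉ E.map f := fun hmem =>
      let ⟨e, he, hev⟩ := Multiset.mem_map.1 hmem
      hv (hev ▸ hf e he)
    rw [Multiset.count_eq_zero_of_notMem hv', Multiset.count_eq_zero_of_notMem hv]

lemma count_map_eq_countP_add_countP_not (P : ε → Prop) [DecidablePred P] (v : α) :
    (E.map f).count v =
      E.countP (fun e => f e = v ∧ P e) + E.countP (fun e => f e = v ∧ ¬ P e) := by
  rw [Multiset.count_map, ← Multiset.countP_eq_card_filter,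
    Multiset.countP_eq_countP_filter_add _ _ P, Multiset.countP_filter, Multiset.countP_filter]
  simp only [eq_comm]

lemma ite_map_eq_val_eq_prod (P : ε → Prop) [DecidablePred P] (hf : ∀ e ∈ E, f e ∈ s) :
    (if E.map f = s.val then (-1) ^ (E.filter P).card else 0 : ℤ) =
      ∏ v ∈ s, if E.countP (fun e => f e = v ∧ P e) + E.countP (fun e => f e = v ∧ ¬ P e) = 1
        then (-1) ^ E.countP (fun e => f e = v ∧ P e) else 0 := by
  simp only [map_eq_val_iff_forall_count_eq_one hf, count_map_eq_countP_add_countP_not P]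
  split_ifs with h
  · have card_filter : (E.filter P).card = ∑ v ∈ s, E.countP (fun e => f e = v ∧ P e) := by
      rw [← Multiset.card_map f, ← Multiset.sum_count_eq_card (s := s)]
      · simp only [Multiset.count_map, Multiset.filter_filter, Multiset.countP_eq_card_filter,
          eq_comm]
      · simp only [Multiset.mem_map, Multiset.mem_filter]
        rintro _ ⟨e, ⟨he, -⟩, rfl⟩
        exact hf e he
    rw [card_filter, ← Finset.prod_pow_eq_pow_sum]
    exact Finset.prod_congr rfl fun v hv => (if_pos (h v hv)).symm
  · push Not at h
    obtain ⟨v, hv, hne⟩ := h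
    exact (Finset.prod_eq_zero hv (if_neg hne)).symm

end

section

variable {E : Multiset (ℕ × ℕ)} {t l r : PTree}

lemma nadirFst_mem_map_some_nodesList {e : ℕ × ℕ} (ht : t.leaves.Nodup) (h₁ : e.1 ∈ t.labels)
    (h₂ : e.2 ∈ t.labels) (hne : e.1 ≠ e.2) : nadirFst t e ∈ t.nodesList.map some := by
  obtain ⟨v, hv, b, h⟩ := PTree.exists_nadir_eq_some ht h₁ h₂ hne
  rw [nadirFst, h]
  exact List.mem_map_of_mem hv

lemma countP_nadirFst_eq_crossings (ht : t.leaves.Nodup) (hv : .node l r ∈ t.nodesList) :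
    E.countP (fun e => nadirFst t e = some (.node l r) ∧
      (t.nadir e.1 e.2).map Prod.snd = some true) = crossings l.labels r.labels E := by
  refine Multiset.countP_congr rfl fun e _ => ?_
  rw [← PTree.nadir_eq_some_true_iff ht hv, nadirFst]
  rcases t.nadir e.1 e.2 with _ | ⟨v, b⟩ <;> simp

lemma countP_nadirFst_eq_crossings_swap (ht : t.leaves.Nodup) (hv : .node l r ∈ t.nodesList)
    (hE : ∀ e ∈ E, e.1 ∈ t.labels ∧ e.2 ∈ t.labels) :
    E.countP (fun e => nadirFst t e = some (.node l r) ∧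
      ¬ (t.nadir e.1 e.2).map Prod.snd = some true) = crossings r.labels l.labels E := by
  refine Multiset.countP_congr rfl fun e he => ?_
  rw [← PTree.nadir_eq_some_false_iff ht hv (hE e he).1 (hE e he).2, nadirFst]
  rcases t.nadir e.1 e.2 with _ | ⟨v, b⟩ <;> simp

lemma prod_map_nodesList_eq_crossingProd {g : PTree → ℤ}
    (hg : ∀ l r, .node l r ∈ t.nodesList → g (.node l r) = crossingSign l.labels r.labels E) :
    (t.nodesList.map g).prod = crossingProd E t := by
  induction t with
  | leaf a => rfl
  | node l r hl hr =>
    simp only [PTree.mem_nodesList_node] at hg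
    rw [PTree.nodesList, List.map_append, List.prod_append, List.map_cons, List.prod_cons,
      hl fun _ _ h => hg _ _ (.inl h), hr fun _ _ h => hg _ _ (.inr (.inr h)),
      hg l r (.inr (.inl rfl)), crossingProd]
    ring

theorem pairPT_eq_crossingProd (ht : t.leaves.Nodup)
    (hE : ∀ e ∈ E, e.1 ∈ t.labels ∧ e.2 ∈ t.labels ∧ e.1 ≠ e.2) :
    pairPT E t = crossingProd E t := by
  have nodup_nodes : (t.nodesList.map some).Nodup :=
    (PTree.nodup_nodesList ht).map (Option.some_injective _)
  let nodes : Finset (Option PTree) := ⟨t.nodesList.map some, nodup_nodes⟩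
  have nadirFst_mem : ∀ e ∈ E, nadirFst t e ∈ nodes := fun e he =>
    nadirFst_mem_map_some_nodesList ht (hE e he).1 (hE e he).2.1 (hE e he).2.2
  have pairPT_eq_prod := ite_map_eq_val_eq_prod
    (fun e => (t.nadir e.1 e.2).map Prod.snd = some true) nadirFst_mem
  have prod_nodes (g : Option PTree → ℤ) : ∏ v ∈ nodes, g v = (t.nodesList.map (g ∘ some)).prod :=
    congrArg List.prod (List.map_map ..)
  rw [pairPT, pairPT_eq_prod, prod_nodes]
  refine prod_map_nodesList_eq_crossingProd fun l r hv => ?_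
  rw [Function.comp_apply, countP_nadirFst_eq_crossings ht hv,
    countP_nadirFst_eq_crossings_swap ht hv fun e he => ⟨(hE e he).1, (hE e he).2.1⟩, crossingSign]

end

/-! ### The pairing vanishes on Jacobi and symmetry combinations of Trees -/

section

variable {A B C : Finset ℕ} {E : Multiset (ℕ × ℕ)} {X Y Z D : PTree} {m : ℕ}

lemma crossings_union_left (hAB : Disjoint A B) :
    crossings (A ∪ B) C E = crossings A C E + crossings B C E := by
  rw [crossings, Multiset.countP_eq_countP_filter_add _ _ fun e => e.1 ∈ A,
    Multiset.countP_filter, Multiset.countP_filter]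
  rw [Finset.disjoint_left] at hAB
  congr 1 <;> exact Multiset.countP_congr rfl fun e _ => by grind

lemma crossings_union_right (hAB : Disjoint A B) :
    crossings C (A ∪ B) E = crossings C A E + crossings C B E := by
  rw [crossings, Multiset.countP_eq_countP_filter_add _ _ fun e => e.2 ∈ A,
    Multiset.countP_filter, Multiset.countP_filter]
  rw [Finset.disjoint_left] at hAB
  congr 1 <;> exact Multiset.countP_congr rfl fun e _ => by grind

lemma crossingSign_swap (A B : Finset ℕ) (E : Multiset (ℕ × ℕ)) :
    crossingSign B A E = -crossingSign A B E := by
  rw [crossingSign, crossingSign, add_comm]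
  split_ifs with h
  · rcases Nat.add_eq_one_iff.1 h with ⟨h₁, h₂⟩ | ⟨h₁, h₂⟩ <;> simp [h₁, h₂]
  · exact neg_zero.symm

lemma crossingSign_eq_zero_of_crossings_eq_zero (h : crossings A B E + crossings B A E = 0) :
    crossingSign A B E = 0 :=
  if_neg (by omega)

lemma crossingSign_union_left (hAB : Disjoint A B)
    (h : crossings A C E + crossings C A E = 0) :
    crossingSign (A ∪ B) C E = crossingSign B C E := by
  obtain ⟨hAC, hCA⟩ := Nat.add_eq_zero_iff.1 h
  rw [crossingSign, crossings_union_left hAB, crossings_union_right hAB, hAC, hCA, zero_add,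
    zero_add, crossingSign]

lemma crossingSign_union_left_mul_eq_zero (hAB : Disjoint A B)
    (hAC : crossings A C E + crossings C A E ≠ 0) (hBC : crossings B C E + crossings C B E ≠ 0) :
    crossingSign (A ∪ B) C E = 0 := by
  rw [crossingSign, crossings_union_left hAB, crossings_union_right hAB]
  exact if_neg (by omega)

lemma crossingSign_jacobi_of_crossings_eq_zero (hAB : Disjoint A B) (hBC : Disjoint B C)
    (h : crossings A C E + crossings C A E = 0) :
    crossingSign (A ∪ B) C E * crossingSign A B E +
      crossingSign (B ∪ C) A E * crossingSign B C E +
      crossingSign (C ∪ A) B E * crossingSign C A E = 0 := by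
  have sign_CA : crossingSign C A E = 0 :=
    crossingSign_eq_zero_of_crossings_eq_zero (by omega)
  rw [crossingSign_union_left hAB h, Finset.union_comm B C,
    crossingSign_union_left hBC.symm (by omega), crossingSign_swap A B, sign_CA]
  ring

lemma crossingSign_jacobi (hAB : Disjoint A B) (hBC : Disjoint B C) (hCA : Disjoint C A) :
    crossingSign (A ∪ B) C E * crossingSign A B E +
      crossingSign (B ∪ C) A E * crossingSign B C E +
      crossingSign (C ∪ A) B E * crossingSign C A E = 0 := by
  by_cases h₁ : crossings A C E + crossings C A E = 0
  · exact crossingSign_jacobi_of_crossings_eq_zero hAB hBC h₁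
  by_cases h₂ : crossings B A E + crossings A B E = 0
  · linear_combination crossingSign_jacobi_of_crossings_eq_zero hBC hCA h₂
  by_cases h₃ : crossings C B E + crossings B C E = 0
  · linear_combination crossingSign_jacobi_of_crossings_eq_zero hCA hAB h₃
  rw [crossingSign_union_left_mul_eq_zero hAB h₁ (by omega),
    crossingSign_union_left_mul_eq_zero hBC h₂ (by omega),
    crossingSign_union_left_mul_eq_zero hCA h₃ (by omega)]
  ring

lemma crossingProd_node_swap (E : Multiset (ℕ × ℕ)) (X Y : PTree) :
    crossingProd E (.node Y X) = -crossingProd E (.node X Y) := by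
  simp only [crossingProd, crossingSign_swap X.labels]
  ring

lemma crossingProd_jacobi (h : (PTree.node (.node X Y) Z).leaves.Nodup) :
    crossingProd E (.node (.node X Y) Z) + crossingProd E (.node (.node Y Z) X) +
      crossingProd E (.node (.node Z X) Y) = 0 := by
  obtain ⟨hXY, -, hXYZ⟩ := PTree.nodup_leaves_node_iff.1 h
  obtain ⟨-, -, hXY⟩ := PTree.nodup_leaves_node_iff.1 hXY
  rw [PTree.labels_node, Finset.disjoint_union_left] at hXYZ
  simp only [crossingProd, PTree.labels_node]
  linear_combination crossingProd E X * crossingProd E Y * crossingProd E Z *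
    crossingSign_jacobi (E := E) hXY hXYZ.2 hXYZ.1.symm

lemma exists_crossingProd_graft_eq_mul (hD : D.leaves.Nodup) (hm : m ∈ D.labels)
    (E : Multiset (ℕ × ℕ)) (L : Finset ℕ) :
    ∃ c, ∀ X, X.labels = L → crossingProd E (D.graft m X) = c * crossingProd E X := by
  induction D with
  | leaf a =>
    obtain rfl : m = a := Finset.mem_singleton.1 hm
    exact ⟨1, fun X _ => by rw [PTree.graft, if_pos rfl, one_mul]⟩
  | node l r hl hr =>
    obtain ⟨hl', hr', hlr⟩ := PTree.nodup_leaves_node_iff.1 hD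
    rw [PTree.labels_node, Finset.mem_union] at hm
    rcases hm with hm | hm
    · obtain ⟨c, hc⟩ := hl hl' hm
      refine ⟨crossingSign (l.labels.erase m ∪ L) r.labels E * c * crossingProd E r,
        fun X hX => ?_⟩
      rw [PTree.graft, PTree.graft_of_notMem (Finset.disjoint_left.1 hlr hm), crossingProd,
        PTree.labels_graft hm, hX, hc X hX]
      ring
    · obtain ⟨c, hc⟩ := hr hr' hm
      refine ⟨crossingSign l.labels (r.labels.erase m ∪ L) E * crossingProd E l * c,
        fun X hX => ?_⟩
      rw [PTree.graft, PTree.graft_of_notMem (Finset.disjoint_right.1 hlr hm), crossingProd,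
        PTree.labels_graft hm, hX, hc X hX]
      ring

end

section

variable {S : Finset ℕ} {D A B C : PTree} {m : ℕ}

lemma pairPT_eq_crossingProd_of_isGraphOn {E : Multiset (ℕ × ℕ)} {t : PTree}
    (hE : IsGraphOn S E) (ht : IsTreeOn S t) : pairPT E t = crossingProd E t :=
  have labels_eq : t.labels = S := ht.2
  pairPT_eq_crossingProd ht.1 (labels_eq ▸ hE.1)

lemma pairPT_tree_swap (G : GraphOn S) (hD : D.leaves.Nodup) (hm : m ∈ D.labels)
    (h₁ : IsTreeOn S (D.graft m (.node A B))) (h₂ : IsTreeOn S (D.graft m (.node B A))) :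
    pairPT G.1 (D.graft m (.node A B)) + pairPT G.1 (D.graft m (.node B A)) = 0 := by
  obtain ⟨c, hc⟩ := exists_crossingProd_graft_eq_mul hD hm G.1 (A.labels ∪ B.labels)
  rw [pairPT_eq_crossingProd_of_isGraphOn G.2 h₁, pairPT_eq_crossingProd_of_isGraphOn G.2 h₂,
    hc _ (PTree.labels_node A B), hc _ ((PTree.labels_node B A).trans (Finset.union_comm _ _)),
    crossingProd_node_swap]
  ring

lemma pairPT_tree_jacobi (G : GraphOn S) (hD : D.leaves.Nodup) (hm : m ∈ D.labels)
    (h₁ : IsTreeOn S (D.graft m (.node (.node A B) C)))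
    (h₂ : IsTreeOn S (D.graft m (.node (.node B C) A)))
    (h₃ : IsTreeOn S (D.graft m (.node (.node C A) B))) :
    pairPT G.1 (D.graft m (.node (.node A B) C)) +
      pairPT G.1 (D.graft m (.node (.node B C) A)) +
      pairPT G.1 (D.graft m (.node (.node C A) B)) = 0 := by
  obtain ⟨c, hc⟩ :=
    exists_crossingProd_graft_eq_mul hD hm G.1 (A.labels ∪ B.labels ∪ C.labels)
  rw [pairPT_eq_crossingProd_of_isGraphOn G.2 h₁, pairPT_eq_crossingProd_of_isGraphOn G.2 h₂,
    pairPT_eq_crossingProd_of_isGraphOn G.2 h₃, hc _ (by simp), hc _ (by simp; grind),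
    hc _ (by simp; grind)]
  linear_combination c *
    crossingProd_jacobi (E := G.1) (PTree.nodup_leaves_of_nodup_graft hm h₁.1)

end

/-! ### The pairing vanishes on Arnold and symmetry combinations and doubled edges -/

/-- The paths in `t` between the endpoints of the edges `e` and `e'` have the same nadir and
travel through it in opposite directions. -/
def OppositeNadirs (t : PTree) (e e' : ℕ × ℕ) : Prop :=
  ∃ v b, t.nadir e.1 e.2 = some (v, b) ∧ t.nadir e'.1 e'.2 = some (v, !b)

section

variable {t l r : PTree} {e e' e₁ e₂ e₃ : ℕ × ℕ} {i j k : ℕ}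

lemma OppositeNadirs.nadirFst_eq (h : OppositeNadirs t e e') : nadirFst t e = nadirFst t e' := by
  obtain ⟨v, b, he, he'⟩ := h
  rw [nadirFst, nadirFst, he, he']
  rfl

lemma oppositeNadirs_swap (ht : t.leaves.Nodup) (hi : i ∈ t.labels) (hj : j ∈ t.labels)
    (hij : i ≠ j) : OppositeNadirs t (i, j) (j, i) := by
  obtain ⟨v, -, b, h⟩ := PTree.exists_nadir_eq_some ht hi hj hij
  exact ⟨v, b, h, by rw [PTree.nadir_swap ht hi hj, h]; rfl⟩

lemma OppositeNadirs.congr {s : PTree} (h : OppositeNadirs s e e')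
    (he : t.nadir e.1 e.2 = s.nadir e.1 e.2) (he' : t.nadir e'.1 e'.2 = s.nadir e'.1 e'.2) :
    OppositeNadirs t e e' := by
  rwa [OppositeNadirs, he, he']

lemma oppositeNadirs_triangle (ht : t.leaves.Nodup) (hi : i ∈ t.labels) (hj : j ∈ t.labels)
    (hk : k ∈ t.labels) (hij : i ≠ j) :
    OppositeNadirs t (i, j) (j, k) ∨ OppositeNadirs t (j, k) (k, i) ∨
      OppositeNadirs t (k, i) (i, j) := by
  induction t with
  | leaf a =>
    rw [PTree.labels_leaf, Finset.mem_singleton] at hi hj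
    exact absurd (hi.trans hj.symm) hij
  | node l r hl hr =>
    obtain ⟨hl', hr', hlr⟩ := PTree.nodup_leaves_node_iff.1 ht
    have opposite_left {x y z : ℕ} (hx : x ∈ l.labels) (hy : y ∈ r.labels) (hz : z ∈ l.labels) :
        OppositeNadirs (.node l r) (x, y) (y, z) :=
      ⟨_, true, PTree.nadir_node_left_right hx hy, PTree.nadir_node_right_left hlr hy hz⟩
    have opposite_right {x y z : ℕ} (hx : x ∈ r.labels) (hy : y ∈ l.labels)
        (hz : z ∈ r.labels) : OppositeNadirs (.node l r) (x, y) (y, z) :=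
      ⟨_, false, PTree.nadir_node_right_left hlr hx hy, PTree.nadir_node_left_right hy hz⟩
    rw [PTree.labels_node, Finset.mem_union] at hi hj hk
    rcases hi with hi | hi <;> rcases hj with hj | hj <;> rcases hk with hk | hk
    · have hij' := PTree.nadir_node_left hlr hi hj
      have hjk' := PTree.nadir_node_left hlr hj hk
      have hki' := PTree.nadir_node_left hlr hk hi
      exact (hl hl' hi hj hk).imp (·.congr hij' hjk')
        (Or.imp (·.congr hjk' hki') (·.congr hki' hij'))
    · exact .inr (.inl (opposite_left hj hk hi))
    · exact .inl (opposite_left hi hj hk)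
    · exact .inr (.inr (opposite_right hk hi hj))
    · exact .inr (.inr (opposite_left hk hi hj))
    · exact .inl (opposite_right hi hj hk)
    · exact .inr (.inl (opposite_right hj hk hi))
    · have hij' := PTree.nadir_node_right hlr hi hj
      have hjk' := PTree.nadir_node_right hlr hj hk
      have hki' := PTree.nadir_node_right hlr hk hi
      exact (hr hr' hi hj hk).imp (·.congr hij' hjk')
        (Or.imp (·.congr hjk' hki') (·.congr hki' hij'))

lemma pairPT_cons_add_pairPT_cons (h : OppositeNadirs t e e') (E : Multiset (ℕ × ℕ)) :
    pairPT (e ::ₘ E) t + pairPT (e' ::ₘ E) t = 0 := by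
  rw [pairPT, pairPT, Multiset.map_cons, Multiset.map_cons, h.nadirFst_eq]
  obtain ⟨v, b, he, he'⟩ := h
  split_ifs
  · cases b <;> simp [he, he', pow_add]
  · exact add_zero 0

lemma pairPT_cons_cons_eq_zero (ht : t.leaves.Nodup) (h : nadirFst t e = nadirFst t e')
    (E : Multiset (ℕ × ℕ)) : pairPT (e ::ₘ e' ::ₘ E) t = 0 := by
  refine if_neg fun hmap => ?_
  have nodup_map : ((e ::ₘ e' ::ₘ E).map (nadirFst t)).Nodup :=
    hmap ▸ (PTree.nodup_nodesList ht).map (Option.some_injective _)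
  simp [h] at nodup_map

lemma pairPT_arnold_of_oppositeNadirs (ht : t.leaves.Nodup) (h : OppositeNadirs t e₁ e₂)
    (E : Multiset (ℕ × ℕ)) :
    pairPT (e₁ ::ₘ e₂ ::ₘ E) t + pairPT (e₂ ::ₘ e₃ ::ₘ E) t + pairPT (e₃ ::ₘ e₁ ::ₘ E) t = 0 := by
  rw [pairPT_cons_cons_eq_zero ht h.nadirFst_eq, Multiset.cons_swap e₃ e₁]
  linear_combination pairPT_cons_add_pairPT_cons h (e₃ ::ₘ E)

lemma pairPT_arnold (ht : t.leaves.Nodup) (hi : i ∈ t.labels) (hj : j ∈ t.labels)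
    (hk : k ∈ t.labels) (hij : i ≠ j) (E : Multiset (ℕ × ℕ)) :
    pairPT ((i, j) ::ₘ (j, k) ::ₘ E) t + pairPT ((j, k) ::ₘ (k, i) ::ₘ E) t +
      pairPT ((k, i) ::ₘ (i, j) ::ₘ E) t = 0 := by
  rcases oppositeNadirs_triangle ht hi hj hk hij with h | h | h
  · exact pairPT_arnold_of_oppositeNadirs ht h E
  · linear_combination pairPT_arnold_of_oppositeNadirs (e₃ := (i, j)) ht h E
  · linear_combination pairPT_arnold_of_oppositeNadirs (e₃ := (j, k)) ht h E

end

/-! ### The dual families of tall Trees and long Graphs -/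

/-- The word `u` lists the elements of `S` other than `r ∈ S` without repetition. Such words index
both the tall Trees and the long Graphs on `S`. -/
def IsWord (S : Finset ℕ) (r : ℕ) (u : List ℕ) : Prop :=
  (r :: u).Nodup ∧ (r :: u).toFinset = S

/-- The tall Tree with leaf `r` deepest, whose other leaves branch off to the right of the path from
`r` to the root, in the order `u` when read upwards from the root. -/
def tallTree (r : ℕ) (u : List ℕ) : PTree :=
  u.foldr (fun a t => .node t (.leaf a)) (.leaf r)

/-- The long Graph: the path that starts at `r` and runs through the word `u` backwards, so that it
ends at the head of `u`. -/
def longGraph (r : ℕ) : List ℕ → Multiset (ℕ × ℕ)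
  | [] => 0
  | a :: u => (u.headD r, a) ::ₘ longGraph r u

section

variable {S : Finset ℕ} {r a b : ℕ} {u v : List ℕ} {E : Multiset (ℕ × ℕ)} {e : ℕ × ℕ}

lemma labels_tallTree (r : ℕ) (u : List ℕ) : (tallTree r u).labels = (r :: u).toFinset := by
  induction u with
  | nil => rfl
  | cons a u ih =>
    rw [tallTree, List.foldr_cons, ← tallTree, PTree.labels_node, ih, PTree.labels_leaf]
    ext
    simp

lemma leaves_tallTree_perm (r : ℕ) (u : List ℕ) : (tallTree r u).leaves.Perm (r :: u) := by
  induction u with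
  | nil => rfl
  | cons a u ih =>
    exact (ih.append_right [a]).trans <|
      (List.perm_append_singleton a (r :: u)).trans (.swap r a u)

lemma isTreeOn_tallTree_iff : IsTreeOn S (tallTree r u) ↔ IsWord S r u := by
  rw [IsTreeOn, (leaves_tallTree_perm r u).nodup_iff, ← PTree.labels, labels_tallTree, IsWord]

lemma headD_mem_cons (r : ℕ) (u : List ℕ) : u.headD r ∈ r :: u := by
  cases u <;> simp

lemma mem_of_mem_longGraph (he : e ∈ longGraph r u) : e.1 ∈ r :: u ∧ e.2 ∈ u := by
  induction u with
  | nil => exact absurd he (Multiset.notMem_zero e)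
  | cons a u ih =>
    rcases Multiset.mem_cons.1 he with rfl | he
    · exact ⟨(List.Perm.swap r a u).mem_iff.1 (.tail _ (headD_mem_cons r u)), .head _⟩
    · obtain ⟨h₁, h₂⟩ := ih he
      exact ⟨(List.Perm.swap r a u).mem_iff.1 (.tail _ h₁), .tail _ h₂⟩

lemma fst_ne_snd_of_mem_longGraph (hu : (r :: u).Nodup) (he : e ∈ longGraph r u) :
    e.1 ≠ e.2 := by
  induction u with
  | nil => exact absurd he (Multiset.notMem_zero e)
  | cons a u ih =>
    obtain ⟨ha, hu'⟩ := List.nodup_cons.1 ((List.Perm.swap a r u).nodup_iff.1 hu)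
    rcases Multiset.mem_cons.1 he with rfl | he
    · exact fun h : u.headD r = a => ha (h ▸ headD_mem_cons r u)
    · exact ih hu' he

lemma exists_mem_longGraph_snd (ha : a ∈ u) : ∃ x, (x, a) ∈ longGraph r u := by
  induction u with
  | nil => cases ha
  | cons b u ih =>
    rcases List.mem_cons.1 ha with rfl | ha
    · exact ⟨_, Multiset.mem_cons_self _ _⟩
    · exact (ih ha).imp fun x => Multiset.mem_cons_of_mem

lemma exists_mem_longGraph_fst (ha : a ∈ r :: u) (hne : a ≠ u.headD r) :
    ∃ x, (a, x) ∈ longGraph r u := by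
  induction u with
  | nil => exact absurd (List.mem_singleton.1 ha) hne
  | cons b u ih =>
    have ha' : a ∈ r :: u :=
      (List.mem_cons.1 ((List.Perm.swap b r u).mem_iff.1 ha)).resolve_left hne
    by_cases h : a = u.headD r
    · exact ⟨b, h ▸ Multiset.mem_cons_self _ _⟩
    · exact (ih ha' h).imp fun x => Multiset.mem_cons_of_mem

lemma connOn_of_forall_reflTransGen (h : ∀ x ∈ S, Relation.ReflTransGen (Adj E) x r) :
    ConnOn S E := by
  have : Std.Symm (Adj E) := ⟨fun _ _ => Or.symm⟩
  exact fun x hx y hy => (h x hx).trans (Std.Symm.symm _ _ (h y hy))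

lemma Adj.mono {E' : Multiset (ℕ × ℕ)} (hE : E ≤ E') (h : Adj E a b) : Adj E' a b :=
  h.imp (Multiset.mem_of_le hE) (Multiset.mem_of_le hE)

lemma reflTransGen_adj_longGraph (ha : a ∈ r :: u) :
    Relation.ReflTransGen (Adj (longGraph r u)) a r := by
  induction u generalizing a with
  | nil => rw [List.mem_singleton.1 ha]
  | cons b u ih =>
    have lift_ih {x : ℕ} (hx : x ∈ r :: u) :
        Relation.ReflTransGen (Adj (longGraph r (b :: u))) x r :=
      Relation.ReflTransGen.mono (fun _ _ => Adj.mono (Multiset.le_cons_self _ _)) _ _ (ih hx)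
    rcases List.mem_cons.1 ((List.Perm.swap b r u).mem_iff.1 ha) with rfl | ha
    · exact (lift_ih (headD_mem_cons r u)).head (.inr (Multiset.mem_cons_self _ _))
    · exact lift_ih ha

lemma isGraphOn_longGraph (hu : IsWord S r u) : IsGraphOn S (longGraph r u) := by
  have mem_iff {x : ℕ} : x ∈ S ↔ x ∈ r :: u := by rw [← hu.2, List.mem_toFinset]
  refine ⟨fun e he => ?_, connOn_of_forall_reflTransGen fun x hx =>
    reflTransGen_adj_longGraph (mem_iff.1 hx)⟩
  obtain ⟨h₁, h₂⟩ := mem_of_mem_longGraph he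
  exact ⟨mem_iff.2 h₁, mem_iff.2 (.tail _ h₂), fst_ne_snd_of_mem_longGraph hu.1 he⟩

lemma crossings_cons_of_snd_notMem {A B : Finset ℕ} (h : e.2 ∉ B) :
    crossings A B (e ::ₘ E) = crossings A B E :=
  Multiset.countP_cons_of_neg _ fun h' => h h'.2

lemma crossingProd_cons_of_snd_notMem {t : PTree} (h : e.2 ∉ t.labels) :
    crossingProd (e ::ₘ E) t = crossingProd E t := by
  induction t with
  | leaf a => rfl
  | node l r hl hr =>
    rw [PTree.labels_node, Finset.notMem_union] at h
    rw [crossingProd, crossingSign, crossings_cons_of_snd_notMem h.2,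
      crossings_cons_of_snd_notMem h.1, hl h.1, hr h.2, crossingProd, crossingSign]

lemma crossings_longGraph_cons (ha : a ∉ r :: u) :
    crossings (r :: u).toFinset {a} (longGraph r (a :: u)) = 1 := by
  have countP_longGraph :
      (longGraph r u).countP (fun e => e.1 ∈ (r :: u).toFinset ∧ e.2 ∈ ({a} : Finset ℕ)) = 0 :=
    Multiset.countP_eq_zero.2 fun e he h =>
      ha (Finset.mem_singleton.1 h.2 ▸ .tail _ (mem_of_mem_longGraph he).2)
  rw [longGraph, crossings, Multiset.countP_cons_of_pos, countP_longGraph]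
  exact ⟨List.mem_toFinset.2 (headD_mem_cons r u), Finset.mem_singleton_self a⟩

lemma crossings_longGraph_cons_swap (ha : a ∉ r :: u) :
    crossings {a} (r :: u).toFinset (longGraph r (a :: u)) = 0 := by
  refine Multiset.countP_eq_zero.2 fun e he h => ?_
  rw [Finset.mem_singleton, List.mem_toFinset] at h
  rcases Multiset.mem_cons.1 he with rfl | he
  · exact ha h.2
  · exact ha (h.1 ▸ (mem_of_mem_longGraph he).1)

lemma crossingSign_longGraph_eq_zero (hu : (r :: u).Nodup) (huv : u.Perm (a :: v))
    (hne : a ≠ u.headD r) : crossingSign (r :: v).toFinset {a} (longGraph r u) = 0 := by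
  have ha : a ∈ u := huv.symm.subset (.head v)
  have mem_of_ne {x : ℕ} (hx : x ∈ r :: u) (hxa : x ≠ a) : x ∈ (r :: v).toFinset := by
    have hperm : (r :: u).Perm (a :: r :: v) := (huv.cons r).trans (.swap a r v)
    exact List.mem_toFinset.2 <| (List.mem_cons.1 (hperm.subset hx)).resolve_left hxa
  obtain ⟨x, hx⟩ := exists_mem_longGraph_snd (r := r) ha
  obtain ⟨y, hy⟩ := exists_mem_longGraph_fst (.tail r ha) hne
  have one_le_in : 1 ≤ crossings (r :: v).toFinset {a} (longGraph r u) :=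
    Multiset.countP_pos.2 ⟨_, hx, mem_of_ne (mem_of_mem_longGraph hx).1
      (fst_ne_snd_of_mem_longGraph hu hx), Finset.mem_singleton_self a⟩
  have one_le_out : 1 ≤ crossings {a} (r :: v).toFinset (longGraph r u) :=
    Multiset.countP_pos.2 ⟨_, hy, Finset.mem_singleton_self a, mem_of_ne
      (.tail r (mem_of_mem_longGraph hy).2) (fst_ne_snd_of_mem_longGraph hu hy).symm⟩
  exact if_neg (by omega)

lemma crossingProd_tallTree_cons (E : Multiset (ℕ × ℕ)) (r a : ℕ) (v : List ℕ) :
    crossingProd E (tallTree r (a :: v)) =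
      crossingSign (r :: v).toFinset {a} E * crossingProd E (tallTree r v) := by
  rw [tallTree, List.foldr_cons, ← tallTree, crossingProd, labels_tallTree, PTree.labels_leaf,
    crossingProd, mul_one]

theorem crossingProd_longGraph_tallTree (hu : (r :: u).Nodup) (huv : u.Perm v) :
    crossingProd (longGraph r u) (tallTree r v) = if u = v then (-1) ^ u.length else 0 := by
  induction v generalizing u with
  | nil =>
    obtain rfl := huv.eq_nil
    rfl
  | cons a v ih =>
    rw [crossingProd_tallTree_cons]
    by_cases hne : a = u.headD r
    · obtain ⟨u, rfl⟩ : ∃ u', u = a :: u' := by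
        cases u with
        | nil => exact absurd huv.length_eq (by simp)
        | cons b u => exact ⟨u, by rw [hne, List.headD_cons]⟩
      have huv' : u.Perm v := huv.cons_inv
      have hav : a ∉ r :: v := fun h => by
        have := huv'.mem_iff (a := a)
        grind
      obtain ⟨hau, hu'⟩ := List.nodup_cons.1 ((List.Perm.swap a r u).nodup_iff.1 hu)
      have toFinset_eq : (r :: v).toFinset = (r :: u).toFinset :=
        (List.toFinset_eq_of_perm _ _ (huv'.cons r)).symm
      rw [crossingSign, toFinset_eq, crossings_longGraph_cons hau,
        crossings_longGraph_cons_swap hau, longGraph, crossingProd_cons_of_snd_notMem, ih hu' huv']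
      · simp [pow_succ']
      · simpa [labels_tallTree] using hav
    · rw [crossingSign_longGraph_eq_zero hu huv hne, zero_mul, if_neg]
      rintro rfl
      exact hne List.headD_cons.symm

end

/-! ### Tall Trees span `Lie(S)` -/

section

variable {R : Type*} [CommRing R]

lemma eq_top_of_forall_mk_single_mem {α : Type*} {J : Submodule R (α →₀ R)}
    {V : Submodule R ((α →₀ R) ⧸ J)}
    (h : ∀ a, Submodule.Quotient.mk (Finsupp.single a 1) ∈ V) : V = ⊤ := by
  refine Submodule.eq_top_iff'.2 fun x => ?_
  obtain ⟨y, rfl⟩ := J.mkQ_surjective x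
  induction y using Finsupp.induction_linear with
  | zero => exact map_zero J.mkQ ▸ V.zero_mem
  | add y z hy hz => exact map_add J.mkQ y z ▸ V.add_mem hy hz
  | single a c =>
    rw [← mul_one c, ← smul_eq_mul, ← Finsupp.smul_single, map_smul]
    exact V.smul_mem c (h a)

end

section

variable (R : Type) [CommRing R] (S : Finset ℕ) {A B C D X Y t : PTree} {m r : ℕ}
  {zs : List PTree}

/-- The class in `Lie(S)` of a tree, with value zero if the tree is not a Tree on `S`. -/
def treeClass (t : PTree) : LieQ R S :=
  if h : IsTreeOn S t then Submodule.Quotient.mk (Finsupp.single ⟨t, h⟩ 1) else 0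

variable {R S}

lemma treeClass_of_isTreeOn (h : IsTreeOn S t) :
    treeClass R S t = Submodule.Quotient.mk (Finsupp.single ⟨t, h⟩ 1) :=
  dif_pos h

lemma treeClass_of_not_isTreeOn (h : ¬ IsTreeOn S t) : treeClass R S t = 0 :=
  dif_neg h

lemma isTreeOn_congr (h : X.leaves.Perm Y.leaves) : IsTreeOn S X ↔ IsTreeOn S Y := by
  rw [IsTreeOn, IsTreeOn, h.nodup_iff, List.toFinset_eq_of_perm _ _ h]

lemma leaves_node_perm (A B : PTree) : (PTree.node A B).leaves.Perm (PTree.node B A).leaves :=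
  List.perm_append_comm

lemma treeClass_graft_swap (hD : D.leaves.Nodup) (hm : m ∈ D.labels)
    (h : IsTreeOn S (D.graft m (.node A B))) :
    treeClass R S (D.graft m (.node A B)) + treeClass R S (D.graft m (.node B A)) = 0 := by
  have h' := (isTreeOn_congr (PTree.leaves_graft_perm D m (leaves_node_perm A B))).1 h
  rw [treeClass_of_isTreeOn h, treeClass_of_isTreeOn h', ← Submodule.Quotient.mk_add,
    Submodule.Quotient.mk_eq_zero]
  exact Submodule.subset_span <| .inr
    ⟨D, A, B, m, ⟨_, h⟩, ⟨_, h'⟩, hD, PTree.mem_labels.1 hm, rfl, rfl, rfl⟩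

lemma leaves_node_node_perm (A B C : PTree) :
    (PTree.node (.node A B) C).leaves.Perm (PTree.node (.node B C) A).leaves := by
  simpa only [PTree.leaves, List.append_assoc] using
    List.perm_append_comm (l₁ := A.leaves) (l₂ := B.leaves ++ C.leaves)

lemma treeClass_graft_jacobi (hD : D.leaves.Nodup) (hm : m ∈ D.labels)
    (h : IsTreeOn S (D.graft m (.node (.node A B) C))) :
    treeClass R S (D.graft m (.node (.node A B) C)) +
      treeClass R S (D.graft m (.node (.node B C) A)) +
      treeClass R S (D.graft m (.node (.node C A) B)) = 0 := by
  have h' := (isTreeOn_congr (PTree.leaves_graft_perm D m (leaves_node_node_perm A B C))).1 h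
  have h'' := (isTreeOn_congr (PTree.leaves_graft_perm D m (leaves_node_node_perm B C A))).1 h'
  rw [treeClass_of_isTreeOn h, treeClass_of_isTreeOn h', treeClass_of_isTreeOn h'',
    ← Submodule.Quotient.mk_add, ← Submodule.Quotient.mk_add, Submodule.Quotient.mk_eq_zero]
  exact Submodule.subset_span <| .inl
    ⟨D, A, B, C, m, ⟨_, h⟩, ⟨_, h'⟩, ⟨_, h''⟩, hD, PTree.mem_labels.1 hm, rfl, rfl, rfl, rfl⟩

/-- The left-normed tree `(⋯((X z₁) z₂)⋯) zₖ`. -/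
def spine (X : PTree) (zs : List PTree) : PTree := zs.foldl .node X

lemma spine_append_singleton (X z : PTree) (zs : List PTree) :
    spine X (zs ++ [z]) = .node (spine X zs) z :=
  List.foldl_append

lemma leaves_spine_perm (h : X.leaves.Perm Y.leaves) (zs : List PTree) :
    (spine X zs).leaves.Perm (spine Y zs).leaves := by
  induction zs generalizing X Y with
  | nil => exact h
  | cons z _ ih => exact ih (h.append_right z.leaves)

lemma exists_spine_eq_graft (h : (spine X zs).leaves.Nodup) :
    ∃ (D : PTree) (m : ℕ), D.leaves.Nodup ∧ m ∈ D.labels ∧ D.labels ⊆ (spine X zs).labels ∧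
      ∀ Y, spine Y zs = D.graft m Y := by
  induction zs using List.reverseRecOn with
  | nil =>
    obtain ⟨m, hm⟩ := X.labels_nonempty
    exact ⟨.leaf m, m, List.nodup_singleton m, Finset.mem_singleton_self m,
      Finset.singleton_subset_iff.2 hm, fun Y => (if_pos rfl).symm⟩
  | append_singleton zs z ih =>
    simp only [spine_append_singleton] at h ⊢
    obtain ⟨hX, hz, hdisj⟩ := PTree.nodup_leaves_node_iff.1 h
    obtain ⟨D, m, hD, hm, hsub, hgraft⟩ := ih hX
    refine ⟨.node D z, m, PTree.nodup_leaves_node_iff.2 ⟨hD, hz, hdisj.mono_left hsub⟩, ?_, ?_,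
      fun Y => ?_⟩
    · exact PTree.labels_node D z ▸ Finset.mem_union_left _ hm
    · rw [PTree.labels_node, PTree.labels_node]
      exact Finset.union_subset_union_left hsub
    · rw [PTree.graft, hgraft, PTree.graft_of_notMem (Finset.disjoint_left.1 hdisj (hsub hm))]

lemma treeClass_spine_swap (A B : PTree) (zs : List PTree) :
    treeClass R S (spine (.node A B) zs) = -treeClass R S (spine (.node B A) zs) := by
  rw [eq_neg_iff_add_eq_zero]
  by_cases h : IsTreeOn S (spine (.node A B) zs)
  · obtain ⟨D, m, hD, hm, -, hgraft⟩ := exists_spine_eq_graft h.1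
    rw [hgraft] at h
    rw [hgraft, hgraft, treeClass_graft_swap hD hm h]
  · have h' := mt (isTreeOn_congr (leaves_spine_perm (leaves_node_perm A B) zs)).2 h
    rw [treeClass_of_not_isTreeOn h, treeClass_of_not_isTreeOn h', add_zero]

lemma treeClass_spine_jacobi (A B C : PTree) (zs : List PTree) :
    treeClass R S (spine (.node (.node A B) C) zs) +
      treeClass R S (spine (.node (.node B C) A) zs) +
      treeClass R S (spine (.node (.node C A) B) zs) = 0 := by
  by_cases h : IsTreeOn S (spine (.node (.node A B) C) zs)
  · obtain ⟨D, m, hD, hm, -, hgraft⟩ := exists_spine_eq_graft h.1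
    rw [hgraft] at h
    rw [hgraft, hgraft, hgraft, treeClass_graft_jacobi hD hm h]
  · have h' := mt (isTreeOn_congr (leaves_spine_perm (leaves_node_node_perm A B C) zs)).2 h
    have h'' := mt (isTreeOn_congr (leaves_spine_perm (leaves_node_node_perm B C A) zs)).2 h'
    rw [treeClass_of_not_isTreeOn h, treeClass_of_not_isTreeOn h', treeClass_of_not_isTreeOn h'',
      add_zero, add_zero]

lemma treeClass_spine_node_node (X A B : PTree) (zs : List PTree) :
    treeClass R S (spine X (.node A B :: zs)) =
      treeClass R S (spine X (A :: B :: zs)) - treeClass R S (spine X (B :: A :: zs)) := by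
  have jacobi := treeClass_spine_jacobi (R := R) (S := S) X A B zs
  have swap_outer := treeClass_spine_swap (R := R) (S := S) (.node A B) X zs
  have swap_inner := treeClass_spine_swap (R := R) (S := S) B X (A :: zs)
  simp only [spine, List.foldl_cons] at jacobi swap_outer swap_inner ⊢
  linear_combination (norm := abel) swap_outer + swap_inner - jacobi

lemma treeClass_spine_tallTree_mem {V : Submodule R (LieQ R S)}
    (hV : ∀ u, treeClass R S (tallTree r u) ∈ V) :
    ∀ u zs, treeClass R S (spine (tallTree r u) zs) ∈ V
  | u, [] => hV u
  | u, .leaf a :: zs => treeClass_spine_tallTree_mem hV (a :: u) zs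
  | u, .node A B :: zs => by
    rw [treeClass_spine_node_node]
    exact V.sub_mem (treeClass_spine_tallTree_mem hV u (A :: B :: zs))
      (treeClass_spine_tallTree_mem hV u (B :: A :: zs))
  termination_by _ zs => (zs.map sizeOf).sum

lemma treeClass_spine_mem {V : Submodule R (LieQ R S)}
    (hV : ∀ u, treeClass R S (tallTree r u) ∈ V) (hr : r ∈ X.labels) (zs : List PTree) :
    treeClass R S (spine X zs) ∈ V := by
  induction X generalizing zs with
  | leaf a =>
    obtain rfl : r = a := Finset.mem_singleton.1 hr
    exact treeClass_spine_tallTree_mem hV [] zs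
  | node A B hA hB =>
    rw [PTree.labels_node, Finset.mem_union] at hr
    rcases hr with hr | hr
    · exact hA hr (B :: zs)
    · rw [treeClass_spine_swap]
      exact V.neg_mem (hB hr (A :: zs))

theorem span_treeClass_tallTree_eq_top (hr : r ∈ S) :
    Submodule.span R (Set.range fun u : {u // IsWord S r u} => treeClass R S (tallTree r u)) =
      ⊤ := by
  refine eq_top_of_forall_mk_single_mem fun T => ?_
  have hT : Submodule.Quotient.mk (Finsupp.single T 1) = treeClass R S (spine T.1 []) :=
    (treeClass_of_isTreeOn T.2).symm
  have hr' : r ∈ T.1.labels := by rwa [PTree.labels, T.2.2]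
  rw [hT]
  refine treeClass_spine_mem (fun u => ?_) hr' []
  by_cases hu : IsWord S r u
  · exact Submodule.subset_span ⟨⟨u, hu⟩, rfl⟩
  · rw [treeClass_of_not_isTreeOn (mt isTreeOn_tallTree_iff.1 hu)]
    exact Submodule.zero_mem _

end

/-! ### Long Graphs span `Eil(S)` -/

/-- The number of edges of `E` incident to the vertex `x`, a loop being counted once. -/
def incidences (x : ℕ) (E : Multiset (ℕ × ℕ)) : ℕ :=
  E.countP fun e => e.1 = x ∨ e.2 = x

section

variable (R : Type) [CommRing R] (S : Finset ℕ) {E E' L M : Multiset (ℕ × ℕ)} {i j k r v x : ℕ}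
  {u : List ℕ}

/-- The class in `Eil(S)` of a multiset of oriented edges, with value zero if it is not a Graph
on `S`. -/
def graphClass (E : Multiset (ℕ × ℕ)) : EilQ R S :=
  if h : IsGraphOn S E then Submodule.Quotient.mk (Finsupp.single ⟨E, h⟩ 1) else 0

variable {R S}

lemma graphClass_of_isGraphOn (h : IsGraphOn S E) :
    graphClass R S E = Submodule.Quotient.mk (Finsupp.single ⟨E, h⟩ 1) :=
  dif_pos h

lemma graphClass_of_not_isGraphOn (h : ¬ IsGraphOn S E) : graphClass R S E = 0 :=
  dif_neg h

lemma adj_cons {a b : ℕ} :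
    Adj ((i, j) ::ₘ E) a b ↔ (a = i ∧ b = j ∨ b = i ∧ a = j) ∨ Adj E a b := by
  simp only [Adj, Multiset.mem_cons, Prod.mk.injEq]
  tauto

lemma isGraphOn_cons_swap (h : IsGraphOn S ((i, j) ::ₘ E)) : IsGraphOn S ((j, i) ::ₘ E) := by
  have adj_eq : Adj ((j, i) ::ₘ E) = Adj ((i, j) ::ₘ E) := by
    ext a b
    rw [adj_cons, adj_cons]
    tauto
  obtain ⟨hij, hE⟩ := Multiset.forall_mem_cons.1 h.1
  exact ⟨Multiset.forall_mem_cons.2 ⟨⟨hij.2.1, hij.1, hij.2.2.symm⟩, hE⟩,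
    by simpa only [ConnOn, adj_eq] using h.2⟩

lemma ConnOn.of_adj_reflTransGen (h : ConnOn S E)
    (hE : ∀ a b, Adj E a b → Relation.ReflTransGen (Adj E') a b) : ConnOn S E' :=
  fun a ha b hb => Relation.ReflTransGen.trans_induction_on (h a ha b hb) (fun _ => .refl)
    (hE _ _) fun _ _ => .trans

lemma isGraphOn_cons_cons_rotate (hik : i ≠ k) (h : IsGraphOn S ((i, j) ::ₘ (j, k) ::ₘ E)) :
    IsGraphOn S ((j, k) ::ₘ (k, i) ::ₘ E) := by
  obtain ⟨hij, hjk, hE⟩ := by simpa only [Multiset.forall_mem_cons] using h.1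
  refine ⟨?_, h.2.of_adj_reflTransGen fun a b hab => ?_⟩
  · simpa only [Multiset.forall_mem_cons] using ⟨hjk, ⟨hjk.2.1, hij.1, hik.symm⟩, hE⟩
  · have adj_jk : Adj ((j, k) ::ₘ (k, i) ::ₘ E) j k := by simp [adj_cons]
    have adj_kj : Adj ((j, k) ::ₘ (k, i) ::ₘ E) k j := by simp [adj_cons]
    have adj_ki : Adj ((j, k) ::ₘ (k, i) ::ₘ E) k i := by simp [adj_cons]
    have adj_ik : Adj ((j, k) ::ₘ (k, i) ::ₘ E) i k := by simp [adj_cons]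
    rw [adj_cons, adj_cons] at hab
    rcases hab with (⟨rfl, rfl⟩ | ⟨rfl, rfl⟩) | (⟨rfl, rfl⟩ | ⟨rfl, rfl⟩) | hab
    · exact .head adj_ik (.single adj_kj)
    · exact .head adj_jk (.single adj_ki)
    · exact .single adj_jk
    · exact .single adj_kj
    · exact .single (adj_cons.2 (.inr (adj_cons.2 (.inr hab))))

lemma graphClass_cons_swap (i j : ℕ) (E : Multiset (ℕ × ℕ)) :
    graphClass R S ((i, j) ::ₘ E) = -graphClass R S ((j, i) ::ₘ E) := by
  rw [eq_neg_iff_add_eq_zero]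
  by_cases h : IsGraphOn S ((i, j) ::ₘ E)
  · have h' := isGraphOn_cons_swap h
    rw [graphClass_of_isGraphOn h, graphClass_of_isGraphOn h', ← Submodule.Quotient.mk_add,
      Submodule.Quotient.mk_eq_zero]
    exact Submodule.subset_span <| .inl <| .inr ⟨i, j, E, ⟨_, h⟩, ⟨_, h'⟩, rfl, rfl, rfl⟩
  · rw [graphClass_of_not_isGraphOn h, graphClass_of_not_isGraphOn (mt isGraphOn_cons_swap h),
      add_zero]

lemma graphClass_arnold (hij : i ≠ j) (hjk : j ≠ k) (hik : i ≠ k) (E : Multiset (ℕ × ℕ)) :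
    graphClass R S ((i, j) ::ₘ (j, k) ::ₘ E) + graphClass R S ((j, k) ::ₘ (k, i) ::ₘ E) +
      graphClass R S ((k, i) ::ₘ (i, j) ::ₘ E) = 0 := by
  have rotate₁ := isGraphOn_cons_cons_rotate (S := S) (j := j) (E := E) hik
  have rotate₂ := isGraphOn_cons_cons_rotate (S := S) (j := k) (E := E) hij.symm
  have rotate₃ := isGraphOn_cons_cons_rotate (S := S) (j := i) (E := E) hjk.symm
  by_cases h₁ : IsGraphOn S ((i, j) ::ₘ (j, k) ::ₘ E)
  · have h₂ := rotate₁ h₁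
    have h₃ := rotate₂ h₂
    rw [graphClass_of_isGraphOn h₁, graphClass_of_isGraphOn h₂, graphClass_of_isGraphOn h₃,
      ← Submodule.Quotient.mk_add, ← Submodule.Quotient.mk_add, Submodule.Quotient.mk_eq_zero]
    exact Submodule.subset_span <| .inl <| .inl
      ⟨i, j, k, E, ⟨_, h₁⟩, ⟨_, h₂⟩, ⟨_, h₃⟩, hij, hjk, hik, rfl, rfl, rfl, rfl⟩
  · have h₃ := mt rotate₃ h₁
    rw [graphClass_of_not_isGraphOn h₁, graphClass_of_not_isGraphOn (mt rotate₂ h₃),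
      graphClass_of_not_isGraphOn h₃, add_zero, add_zero]

lemma graphClass_doubled (e : ℕ × ℕ) (E : Multiset (ℕ × ℕ)) :
    graphClass R S (e ::ₘ e ::ₘ E) = 0 := by
  by_cases h : IsGraphOn S (e ::ₘ e ::ₘ E)
  · rw [graphClass_of_isGraphOn h, Submodule.Quotient.mk_eq_zero]
    exact Submodule.subset_span <| .inr ⟨e.1, e.2, E, ⟨_, h⟩, .inl rfl, rfl⟩
  · exact graphClass_of_not_isGraphOn h

lemma graphClass_eq_zero_of_loop_mem (h : (v, v) ∈ E) : graphClass R S E = 0 :=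
  graphClass_of_not_isGraphOn fun hE => (hE.1 _ h).2.2 rfl

lemma graphClass_cons_cons_mem {V : Submodule R (EilQ R S)} (hvi : v ≠ i) (hvj : v ≠ j)
    (hi : graphClass R S ((v, i) ::ₘ (i, j) ::ₘ E) ∈ V)
    (hj : graphClass R S ((v, j) ::ₘ (i, j) ::ₘ E) ∈ V) :
    graphClass R S ((v, i) ::ₘ (v, j) ::ₘ E) ∈ V := by
  rcases eq_or_ne i j with rfl | hij
  · exact graphClass_doubled (R := R) (S := S) (v, i) E ▸ V.zero_mem
  · have arnold := graphClass_arnold (R := R) (S := S) hvi hij hvj E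
    rw [graphClass_cons_swap j v, Multiset.cons_swap (i, j), graphClass_cons_swap j v,
      Multiset.cons_swap (v, j) (v, i)] at arnold
    have eq_sub : graphClass R S ((v, i) ::ₘ (v, j) ::ₘ E) =
        graphClass R S ((v, i) ::ₘ (i, j) ::ₘ E) - graphClass R S ((v, j) ::ₘ (i, j) ::ₘ E) := by
      linear_combination (norm := abel) -arnold
    exact eq_sub ▸ V.sub_mem hi hj

lemma incidences_cons (x : ℕ) (e : ℕ × ℕ) (E : Multiset (ℕ × ℕ)) :
    incidences x (e ::ₘ E) = incidences x E + if e.1 = x ∨ e.2 = x then 1 else 0 :=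
  Multiset.countP_cons _ e E

lemma graphClass_add_mem_of_forall_cons {V : Submodule R (EilQ R S)} (hM : incidences v M ≠ 0)
    (h : ∀ i M', v ≠ i → M.card = M'.card + 1 →
      (∀ x, incidences x M = incidences x ((v, i) ::ₘ M')) →
      graphClass R S (L + (v, i) ::ₘ M') ∈ V) :
    graphClass R S (L + M) ∈ V := by
  obtain ⟨⟨i, j⟩, he, hincident⟩ := Multiset.countP_pos.1 (Nat.pos_of_ne_zero hM)
  obtain ⟨M', rfl⟩ := Multiset.exists_cons_of_mem he
  rcases eq_or_ne i j with rfl | hij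
  · exact graphClass_eq_zero_of_loop_mem (R := R) (S := S) (Multiset.mem_add.2 (.inr he)) ▸
      V.zero_mem
  rcases hincident with rfl | rfl
  · exact h j M' hij (Multiset.card_cons _ _) fun _ => rfl
  · rw [Multiset.add_cons, graphClass_cons_swap, ← Multiset.add_cons]
    refine V.neg_mem (h i M' hij.symm (Multiset.card_cons _ _) fun x => ?_)
    simp only [incidences_cons, or_comm]

lemma reflTransGen_adj_mem (hM : ∀ x ∈ r :: u, incidences x M = 0)
    (h : Relation.ReflTransGen (Adj (longGraph r u + M)) r x) : x ∈ r :: u := by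
  induction h with
  | refl => exact .head u
  | tail _ hadj hy =>
    have notMem_of_incident {e : ℕ × ℕ} (he : e.1 = _ ∨ e.2 = _) : e ∉ M := fun heM =>
      (Multiset.countP_pos.2 ⟨e, heM, he⟩).ne' (hM _ hy)
    rcases hadj with hadj | hadj <;> rcases Multiset.mem_add.1 hadj with hadj | hadj
    · exact .tail r (mem_of_mem_longGraph hadj).2
    · exact absurd hadj (notMem_of_incident (.inl rfl))
    · exact (mem_of_mem_longGraph hadj).1
    · exact absurd hadj (notMem_of_incident (.inr rfl))

lemma IsGraphOn.eq_zero_and_isWord (h : IsGraphOn S (longGraph r u + M)) (hr : r ∈ S)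
    (hu : (r :: u).Nodup) (hM : ∀ x ∈ r :: u, incidences x M = 0) : M = 0 ∧ IsWord S r u := by
  have mem_of_mem {x : ℕ} (hx : x ∈ S) : x ∈ r :: u := reflTransGen_adj_mem hM (h.2 r hr x hx)
  refine ⟨Multiset.eq_zero_of_forall_notMem fun e he => ?_, hu, ?_⟩
  · have he₁ := (h.1 e (Multiset.mem_add.2 (.inr he))).1
    exact (Multiset.countP_pos.2 ⟨e, he, .inl rfl⟩).ne' (hM e.1 (mem_of_mem he₁))
  · refine subset_antisymm (fun x hx => ?_) fun x hx => List.mem_toFinset.2 (mem_of_mem hx)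
    rcases List.mem_cons.1 (List.mem_toFinset.1 hx) with rfl | hx
    · exact hr
    · obtain ⟨y, hy⟩ := exists_mem_longGraph_snd (r := r) hx
      exact (h.1 _ (Multiset.mem_add.2 (.inl hy))).2.1

lemma graphClass_longGraph_add_mem_of_incidences_eq_zero {V : Submodule R (EilQ R S)}
    (hV : ∀ u, IsWord S r u → graphClass R S (longGraph r u) ∈ V) (hr : r ∈ S)
    (hu : (r :: u).Nodup) (hM : ∀ x ∈ r :: u, incidences x M = 0) :
    graphClass R S (longGraph r u + M) ∈ V := by
  by_cases h : IsGraphOn S (longGraph r u + M)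
  · obtain ⟨rfl, hword⟩ := h.eq_zero_and_isWord hr hu hM
    simpa only [add_zero] using hV u hword
  · exact graphClass_of_not_isGraphOn (R := R) h ▸ V.zero_mem

-- At the endpoint of the path, an Arnold combination trades a further edge for one that is not
-- incident to the endpoint; once a single edge remains there, it prolongs the path.
lemma graphClass_longGraph_add_mem {V : Submodule R (EilQ R S)}
    (hV : ∀ u, IsWord S r u → graphClass R S (longGraph r u) ∈ V) (hr : r ∈ S)
    (hu : (r :: u).Nodup) (hM : ∀ x ∈ r :: u, x ≠ u.headD r → incidences x M = 0) :
    graphClass R S (longGraph r u + M) ∈ V := by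
  induction hc : M.card generalizing u M with
  | zero =>
    obtain rfl := Multiset.card_eq_zero.1 hc
    exact graphClass_longGraph_add_mem_of_incidences_eq_zero hV hr hu fun _ _ => rfl
  | succ c extend =>
    obtain ⟨v, hv⟩ : ∃ v, u.headD r = v := ⟨_, rfl⟩
    rw [hv] at hM
    induction hd : incidences v M generalizing M with
    | zero =>
      refine graphClass_longGraph_add_mem_of_incidences_eq_zero hV hr hu fun x hx => ?_
      exact (eq_or_ne x v).elim (· ▸ hd) (hM x hx)
    | succ d reduce =>
      refine graphClass_add_mem_of_forall_cons (hd.trans_ne d.succ_ne_zero)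
        fun i M hvi hcard hinc => ?_
      simp only [hinc, incidences_cons] at hM hd
      by_cases hvM : incidences v M = 0
      · rw [Multiset.add_cons, ← Multiset.cons_add, ← hv, ← longGraph]
        have i_notMem : i ∉ r :: u := fun hi => by simpa using hM i hi hvi.symm
        refine extend ((List.Perm.swap r i u).nodup_iff.1 (List.nodup_cons.2 ⟨i_notMem, hu⟩)) ?_
          (by omega)
        grind
      · rw [Multiset.add_cons, ← Multiset.cons_add]
        refine graphClass_add_mem_of_forall_cons hvM fun j M hvj hcard' hinc' => ?_
        simp only [hinc', incidences_cons] at hM hd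
        have trade_mem {k : ℕ} (hk : k = i ∨ k = j) :
            graphClass R S (longGraph r u + (v, k) ::ₘ (i, j) ::ₘ M) ∈ V := by
          refine reduce ?_ ?_ ?_ <;> simp only [incidences_cons, Multiset.card_cons] <;> grind
        rw [Multiset.cons_add, Multiset.add_cons]
        refine graphClass_cons_cons_mem hvi hvj ?_ ?_
        · simpa only [Multiset.add_cons] using trade_mem (.inl rfl)
        · simpa only [Multiset.add_cons] using trade_mem (.inr rfl)

lemma span_graphClass_longGraph_eq_top (hr : r ∈ S) :
    Submodule.span R (Set.range fun u : {u // IsWord S r u} => graphClass R S (longGraph r u)) =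
      ⊤ := by
  refine eq_top_of_forall_mk_single_mem fun ⟨E, hE⟩ => ?_
  rw [← graphClass_of_isGraphOn hE, ← zero_add E]
  exact graphClass_longGraph_add_mem (u := []) (fun u hu => Submodule.subset_span ⟨⟨u, hu⟩, rfl⟩) hr
    (List.nodup_singleton r) fun x hx hne => absurd (List.mem_singleton.1 hx) hne

end

/-! ### The induced pairing -/

section

variable {R M N ι : Type*} [CommRing R] [AddCommGroup M] [Module R M] [AddCommGroup N] [Module R N]
  [Finite ι] {p : M →ₗ[R] N →ₗ[R] R} {x : ι → M} {y : ι → N} {c : ι → Rˣ}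

lemma bijective_of_span_eq_top (hx : Submodule.span R (Set.range x) = ⊤)
    (hy : Submodule.span R (Set.range y) = ⊤)
    (hp : ∀ i j, p (x i) (y j) = if i = j then (c i : R) else 0) : Function.Bijective p := by
  have := Fintype.ofFinite ι
  have apply_sum (a : ι → R) (j : ι) : p (∑ i, a i • x i) (y j) = a j * c j := by
    simp [hp]
  refine ⟨(injective_iff_map_eq_zero p).2 fun m hm => ?_, fun f => ?_⟩
  · obtain ⟨a, rfl⟩ := (Submodule.mem_span_range_iff_exists_fun R).1
      (hx ▸ Submodule.mem_top (x := m))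
    refine Finset.sum_eq_zero fun j _ => ?_
    have ha : a j * c j = 0 := by rw [← apply_sum, hm, LinearMap.zero_apply]
    rw [(Units.mul_left_eq_zero (c j)).1 ha, zero_smul]
  · refine ⟨∑ i, (f (y i) * ↑(c i)⁻¹) • x i, LinearMap.ext_on_range hy fun j => ?_⟩
    rw [apply_sum, Units.inv_mul_cancel_right]

lemma isPerfPair_of_span_eq_top (hx : Submodule.span R (Set.range x) = ⊤)
    (hy : Submodule.span R (Set.range y) = ⊤)
    (hp : ∀ i j, p (x i) (y j) = if i = j then (c i : R) else 0) : p.IsPerfPair where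
  bijective_left := bijective_of_span_eq_top hx hy hp
  bijective_right := bijective_of_span_eq_top (c := c) hy hx fun j i => by
    rw [LinearMap.flip_apply, hp]
    grind

end

section

variable (R : Type) [CommRing R] (S : Finset ℕ) {r : ℕ} {u v : List ℕ}

/-- The configuration pairing `pairGT` as a bilinear map. -/
def configurationForm : GammaF R S →ₗ[R] ThetaF R S →ₗ[R] R :=
  Finsupp.linearCombination R fun G =>
    Finsupp.linearCombination R fun T => ((pairPT G.1 T.1 : ℤ) : R)

variable {R S}

lemma configurationForm_apply (β : GammaF R S) (α : ThetaF R S) :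
    configurationForm R S β α = pairGT β α := by
  simp only [configurationForm, pairGT, Finsupp.linearCombination_apply, Finsupp.sum,
    LinearMap.sum_apply, LinearMap.smul_apply, smul_eq_mul, Finset.mul_sum, mul_assoc]

lemma configurationForm_single_single (G : GraphOn S) (T : TreeOn S) :
    configurationForm R S (Finsupp.single G 1) (Finsupp.single T 1) =
      ((pairPT G.1 T.1 : ℤ) : R) := by
  simp [configurationForm]

lemma jsub_le_ker_flip : Jsub R S ≤ (configurationForm R S).flip.ker := by
  refine Submodule.span_le.2 fun x hx => Finsupp.lhom_ext' fun G => LinearMap.ext_ring ?_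
  rcases hx with ⟨D, A, B, C, m, T₁, T₂, T₃, hD, hm, h₁, h₂, h₃, rfl⟩ |
    ⟨D, A, B, m, T₁, T₂, hD, hm, h₁, h₂, rfl⟩
  · have jacobi := pairPT_tree_jacobi G hD (PTree.mem_labels.2 hm) (h₁ ▸ T₁.2) (h₂ ▸ T₂.2)
      (h₃ ▸ T₃.2)
    simpa [configurationForm_single_single, h₁, h₂, h₃] using congrArg (Int.cast : ℤ → R) jacobi
  · have antisymmetry := pairPT_tree_swap G hD (PTree.mem_labels.2 hm) (h₁ ▸ T₁.2) (h₂ ▸ T₂.2)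
    simpa [configurationForm_single_single, h₁, h₂] using congrArg (Int.cast : ℤ → R) antisymmetry

lemma isub_le_ker : Isub R S ≤ (configurationForm R S).ker := by
  refine Submodule.span_le.2 fun x hx => Finsupp.lhom_ext' fun T => LinearMap.ext_ring ?_
  have labels_eq : T.1.labels = S := T.2.2
  have opposite {i j : ℕ} {E : Multiset (ℕ × ℕ)} {G : GraphOn S} (h : G.1 = (i, j) ::ₘ E) :
      OppositeNadirs T.1 (i, j) (j, i) := by
    obtain ⟨hi, hj, hij⟩ := G.2.1 (i, j) (h ▸ Multiset.mem_cons_self _ _)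
    exact oppositeNadirs_swap T.2.1 (labels_eq.ge hi) (labels_eq.ge hj) hij
  rcases hx with (⟨i, j, k, E, G₁, G₂, G₃, hij, -, -, h₁, h₂, h₃, rfl⟩ |
    ⟨i, j, E, G₁, G₂, h₁, h₂, rfl⟩) | ⟨i, j, E, G, h, rfl⟩
  · have hG₁ := G₁.2.1
    simp only [h₁, Multiset.forall_mem_cons, ← labels_eq] at hG₁
    have arnold := pairPT_arnold T.2.1 hG₁.1.1 hG₁.1.2.1 hG₁.2.1.2.1 hij E
    simpa [configurationForm_single_single, h₁, h₂, h₃] using congrArg (Int.cast : ℤ → R) arnold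
  · have antisymmetry := pairPT_cons_add_pairPT_cons (opposite h₁) E
    simpa [configurationForm_single_single, h₁, h₂] using congrArg (Int.cast : ℤ → R) antisymmetry
  · have pairPT_eq_zero : pairPT G.1 T.1 = 0 := by
      rcases h with h | h
      · exact h ▸ pairPT_cons_cons_eq_zero T.2.1 rfl E
      · exact h ▸ pairPT_cons_cons_eq_zero T.2.1 (opposite h).nadirFst_eq E
    simp [configurationForm_single_single, pairPT_eq_zero]

variable (R S) in
/-- The bilinear pairing between `Eil(S)` and `Lie(S)` induced by the configuration pairing. -/
def configurationPairing : EilQ R S →ₗ[R] LieQ R S →ₗ[R] R :=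
  LinearMap.liftQ₂ (Isub R S) (Jsub R S) (configurationForm R S) isub_le_ker jsub_le_ker_flip

lemma configurationPairing_mk_mk (β : GammaF R S) (α : ThetaF R S) :
    configurationPairing R S (Submodule.Quotient.mk β) (Submodule.Quotient.mk α) = pairGT β α :=
  configurationForm_apply β α

lemma IsWord.perm (hu : IsWord S r u) (hv : IsWord S r v) : u.Perm v :=
  (List.perm_of_nodup_nodup_toFinset_eq hu.1 hv.1 (hu.2.trans hv.2.symm)).cons_inv

lemma configurationPairing_longGraph_tallTree (hu : IsWord S r u) (hv : IsWord S r v) :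
    configurationPairing R S (graphClass R S (longGraph r u)) (treeClass R S (tallTree r v)) =
      if u = v then (-1) ^ u.length else 0 := by
  have hG := isGraphOn_longGraph hu
  have hT := isTreeOn_tallTree_iff.2 hv
  rw [graphClass_of_isGraphOn hG, treeClass_of_isTreeOn hT]
  refine (configurationForm_single_single _ _).trans ?_
  rw [pairPT_eq_crossingProd_of_isGraphOn hG hT, crossingProd_longGraph_tallTree hu.1 (hu.perm hv)]
  push_cast
  rfl

instance : Finite {u // IsWord S r u} := by
  rcases isEmpty_or_nonempty {u // IsWord S r u} with _ | ⟨v, hv⟩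
  · infer_instance
  · exact (List.finite_toSet v.permutations).subset fun u hu =>
      List.mem_permutations.2 (IsWord.perm hu hv)

theorem isPerfPair_configurationPairing (hS : S.Nonempty) :
    (configurationPairing R S).IsPerfPair := by
  obtain ⟨r, hr⟩ := hS
  refine isPerfPair_of_span_eq_top (c := fun u => (-1) ^ u.1.length)
    (span_graphClass_longGraph_eq_top hr) (span_treeClass_tallTree_eq_top hr) fun u v => ?_
  simp [configurationPairing_longGraph_tallTree u.2 v.2, Subtype.ext_iff]

end

/-- the configuration pairing descends to a well-defined bilinear pairing
`Eil(n) × Lie(n) → R` and this pairing is perfect: both induced maps to the dual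
modules are isomorphisms. -/
theorem perfect_pairing_Lie_Eil (R : Type) [CommRing R] (n : ℕ) (hn : 1 ≤ n) :
    ∃ p : EilQ R (Finset.range n) →ₗ[R] LieQ R (Finset.range n) →ₗ[R] R,
      (∀ (β : GammaF R (Finset.range n)) (α : ThetaF R (Finset.range n)),
        p (Submodule.Quotient.mk β) (Submodule.Quotient.mk α) = pairGT β α) ∧
      Function.Bijective p ∧ Function.Bijective p.flip := by
  have perfect : (configurationPairing R (Finset.range n)).IsPerfPair :=
    isPerfPair_configurationPairing ⟨0, Finset.mem_range.2 hn⟩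
  exact ⟨_, configurationPairing_mk_mk, perfect.bijective_left, perfect.bijective_right⟩

end GTPairing
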